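/- Score approximation from an approximation of ξ (network-free form of the score approximation theorem): let ε ∈ (0,1), T > 0, S > 0, and let ḡ : ℝ^k × [0,T] → ℝ^k be measurable with ḡ(z,t) = 0 whenever ‖z‖₂ > S and sup over ‖z‖₂ ≤ S and t ∈ [0,T] of ‖ḡ(z,t) − ξ(z,t)‖_∞ ≤ ε. Assume the truncation bound ∫ ‖ξ(βᵀΛ_t⁻¹r, t)‖₂² · 1{‖βᵀΛ_t⁻¹r‖₂ > S} p_t(r) dr ≤ ε² for all t ∈ [0,T]. Define s̄(r, t) = α_t Λ_t⁻¹ β ḡ(βᵀ Λ_t⁻¹ r, t) − Λ_t⁻¹ r. Then for every t ∈ [0,T]: (∫_{ℝ^d} ‖s̄(r, t) − ∇ log p_t(r)‖₂² p_t(r) dr)^{1/2} ≤ (√k + 1) ε / min{σ_d², 1}. -/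

import Mathlib

open MeasureTheory Matrix

noncomputable section

/-- Euclidean (ℓ²) norm on `Fin n → ℝ`. -/
def eucNorm {n : ℕ} (x : Fin n → ℝ) : ℝ := Real.sqrt (∑ i, x i ^ 2)

/-- The `n`-dimensional Gaussian density `φ(x; μ, S)`. -/
def gaussD (n : ℕ) (x μ : Fin n → ℝ) (S : Matrix (Fin n) (Fin n) ℝ) : ℝ :=
  (2 * Real.pi) ^ (-(n : ℝ) / 2) * S.det ^ (-(1 : ℝ) / 2) *
    Real.exp (-((x - μ) ⬝ᵥ (S⁻¹ *ᵥ (x - μ))) / 2)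

/-- Gradient as the vector of partial derivatives. -/
def gradv {n : ℕ} (f : (Fin n → ℝ) → ℝ) (x : Fin n → ℝ) : Fin n → ℝ :=
  fun i => fderiv ℝ f x (Pi.single i 1)

/-- `α_t = e^{-t/2}`. -/
def af (t : ℝ) : ℝ := Real.exp (-t / 2)

/-- `h_t = 1 - α_t²`. -/
def hf (t : ℝ) : ℝ := 1 - af t ^ 2

/-- `Λ_t = diag(h_t + σ_i² α_t²)`. -/
def Lam {d : ℕ} (σ : Fin d → ℝ) (t : ℝ) : Matrix (Fin d) (Fin d) ℝ :=
  Matrix.diagonal fun i => hf t + σ i ^ 2 * af t ^ 2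

/-- `Λ_t^{-1/2}`. -/
def LamInvSqrt {d : ℕ} (σ : Fin d → ℝ) (t : ℝ) : Matrix (Fin d) (Fin d) ℝ :=
  Matrix.diagonal fun i => (Real.sqrt (hf t + σ i ^ 2 * af t ^ 2))⁻¹

/-- `Γ_t = (βᵀ Λ_t⁻¹ β)⁻¹`. -/
def Gam {d k : ℕ} (β : Matrix (Fin d) (Fin k) ℝ) (σ : Fin d → ℝ) (t : ℝ) :
    Matrix (Fin k) (Fin k) ℝ :=
  (βᵀ * (Lam σ t)⁻¹ * β)⁻¹

/-- `T_t = Λ_t^{-1/2} β Γ_t βᵀ Λ_t^{-1/2}`. -/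
def Tproj {d k : ℕ} (β : Matrix (Fin d) (Fin k) ℝ) (σ : Fin d → ℝ) (t : ℝ) :
    Matrix (Fin d) (Fin d) ℝ :=
  LamInvSqrt σ t * β * Gam β σ t * βᵀ * LamInvSqrt σ t

/-- Time-`t` marginal density `p_t`. -/
def pT {d k : ℕ} (β : Matrix (Fin d) (Fin k) ℝ) (σ : Fin d → ℝ)
    (pfac : (Fin k → ℝ) → ℝ) (t : ℝ) (r : Fin d → ℝ) : ℝ :=
  ∫ f : Fin k → ℝ, gaussD d r (af t • (β *ᵥ f)) (Lam σ t) * pfac f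

/-- Smoothed factor density `p_t^fac`. -/
def pTfac {d k : ℕ} (β : Matrix (Fin d) (Fin k) ℝ) (σ : Fin d → ℝ)
    (pfac : (Fin k → ℝ) → ℝ) (t : ℝ) (y : Fin k → ℝ) : ℝ :=
  ∫ f : Fin k → ℝ, gaussD k y (af t • f) (Gam β σ t) * pfac f

/-- The posterior-mean-type function `ξ(z, t)`. -/
def xiFun {d k : ℕ} (β : Matrix (Fin d) (Fin k) ℝ) (σ : Fin d → ℝ)
    (pfac : (Fin k → ℝ) → ℝ) (t : ℝ) (z : Fin k → ℝ) : Fin k → ℝ :=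
  (∫ f : Fin k → ℝ, gaussD k (Gam β σ t *ᵥ z) (af t • f) (Gam β σ t) * pfac f)⁻¹ •
    ∫ f : Fin k → ℝ, (gaussD k (Gam β σ t *ᵥ z) (af t • f) (Gam β σ t) * pfac f) • f

lemma gaussD_diag_exp {d : ℕ} (D : Fin d → ℝ) (hD : ∀ i, 0 < D i) (r μ : Fin d → ℝ) :
    gaussD d r μ (Matrix.diagonal D) =
      ((2 * Real.pi) ^ (-(d : ℝ) / 2) * (Matrix.diagonal D).det ^ (-(1 : ℝ) / 2)) *
        Real.exp (∑ i, -(r i - μ i) ^ 2 / (2 * D i)) := by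
  unfold gaussD
  have hinv : (Matrix.diagonal D)⁻¹ = Matrix.diagonal (fun i => (D i)⁻¹) := by
    apply Matrix.inv_eq_right_inv
    rw [Matrix.diagonal_mul_diagonal]
    have : (fun i => D i * (D i)⁻¹) = fun _ => 1 := by
      funext i; exact mul_inv_cancel₀ (hD i).ne'
    rw [this, Matrix.diagonal_one]
  congr 2
  rw [hinv, dotProduct, ← Finset.sum_neg_distrib, Finset.sum_div]
  refine Finset.sum_congr rfl fun i _ => ?_
  rw [Matrix.mulVec_diagonal]
  have := (hD i).ne'
  simp only [Pi.sub_apply]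
  field_simp

lemma gaussD_diag_const_pos {d : ℕ} (D : Fin d → ℝ) (hD : ∀ i, 0 < D i) :
    0 < ((2 * Real.pi) ^ (-(d : ℝ) / 2) * (Matrix.diagonal D).det ^ (-(1 : ℝ) / 2)) := by
  rw [Matrix.det_diagonal]
  have : 0 < ∏ i, D i := Finset.prod_pos fun i _ => hD i
  have := Real.pi_pos
  positivity

lemma gaussD_diag_prod {d : ℕ} (D : Fin d → ℝ) (hD : ∀ i, 0 < D i) (r μ : Fin d → ℝ) :
    gaussD d r μ (Matrix.diagonal D) =
      ∏ i, ProbabilityTheory.gaussianPDFReal (μ i) (D i).toNNReal (r i) := by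
  rw [gaussD_diag_exp D hD]
  simp only [ProbabilityTheory.gaussianPDFReal, fun i => Real.coe_toNNReal (D i) (hD i).le]
  rw [Finset.prod_mul_distrib, Real.exp_sum, Matrix.det_diagonal]
  congr 1
  rw [Finset.prod_inv_distrib]
  have h2 : ∀ i, √(2 * Real.pi * D i) = (2 * Real.pi) ^ ((1 : ℝ) / 2) * D i ^ ((1 : ℝ) / 2) := by
    intro i
    rw [Real.sqrt_eq_rpow, Real.mul_rpow (by positivity) (hD i).le]
  simp only [h2]
  rw [Finset.prod_mul_distrib, Finset.prod_const, Real.finsetProd_rpow _ _ (fun i _ => (hD i).le),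
    mul_inv, Finset.card_univ, Fintype.card_fin, ← Real.rpow_natCast, ← Real.rpow_mul (by positivity),
    ← Real.rpow_neg (by positivity), ← Real.rpow_neg (Finset.prod_nonneg fun i _ => (hD i).le)]
  congr 2 <;> ring

lemma gaussD_diag_integrable {d : ℕ} (D : Fin d → ℝ) (hD : ∀ i, 0 < D i) (μ : Fin d → ℝ) :
    Integrable (fun r => gaussD d r μ (Matrix.diagonal D)) := by
  simp only [gaussD_diag_prod D hD]
  exact Integrable.fintype_prod (μ := fun _ => volume)
    (f := fun i x => ProbabilityTheory.gaussianPDFReal (μ i) (D i).toNNReal x)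
    (fun i => ProbabilityTheory.integrable_gaussianPDFReal _ _)

lemma gaussD_diag_integral {d : ℕ} (D : Fin d → ℝ) (hD : ∀ i, 0 < D i) (μ : Fin d → ℝ) :
    ∫ r, gaussD d r μ (Matrix.diagonal D) = 1 := by
  simp only [gaussD_diag_prod D hD]
  rw [integral_fintype_prod_volume_eq_prod
    (f := fun i x => ProbabilityTheory.gaussianPDFReal (μ i) (D i).toNNReal x)]
  refine Finset.prod_eq_one fun i _ => ?_
  apply ProbabilityTheory.integral_gaussianPDFReal_eq_one
  exact (Real.toNNReal_pos.2 (hD i)).ne'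

lemma gaussD_continuous {X : Type*} [TopologicalSpace X] {n : ℕ} (S : Matrix (Fin n) (Fin n) ℝ)
    {a b : X → Fin n → ℝ} (ha : Continuous a) (hb : Continuous b) :
    Continuous fun x => gaussD n (a x) (b x) S := by
  unfold gaussD
  have : Continuous fun x => (a x - b x) ⬝ᵥ (S⁻¹ *ᵥ (a x - b x)) :=
    (ha.sub hb).dotProduct (continuous_const.matrix_mulVec (ha.sub hb))
  fun_prop

lemma gaussD_diag_pos {d : ℕ} (D : Fin d → ℝ) (hD : ∀ i, 0 < D i) (r μ : Fin d → ℝ) :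
    0 < gaussD d r μ (Matrix.diagonal D) := by
  rw [gaussD_diag_exp D hD]
  exact mul_pos (gaussD_diag_const_pos D hD) (Real.exp_pos _)

lemma gaussD_diag_le {d : ℕ} (D : Fin d → ℝ) (hD : ∀ i, 0 < D i) (r μ : Fin d → ℝ) :
    gaussD d r μ (Matrix.diagonal D) ≤
      ((2 * Real.pi) ^ (-(d : ℝ) / 2) * (Matrix.diagonal D).det ^ (-(1 : ℝ) / 2)) := by
  rw [gaussD_diag_exp D hD]
  refine mul_le_of_le_one_right (gaussD_diag_const_pos D hD).le ?_
  rw [Real.exp_le_one_iff]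
  refine Finset.sum_nonpos fun i _ => ?_
  have := hD i
  rw [neg_div]
  have : 0 ≤ (r i - μ i) ^ 2 / (2 * D i) := by positivity
  linarith

/-- derivative of the Gaussian in the space variable -/
def gaussF {d : ℕ} (D : Fin d → ℝ) (r μ : Fin d → ℝ) : (Fin d → ℝ) →L[ℝ] ℝ :=
  ∑ i, (gaussD d r μ (Matrix.diagonal D) * (-(r i - μ i) / D i)) •
    ContinuousLinearMap.proj (R := ℝ) (φ := fun _ : Fin d => ℝ) i

lemma gaussD_hasFDerivAt {d : ℕ} (D : Fin d → ℝ) (hD : ∀ i, 0 < D i) (r μ : Fin d → ℝ) :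
    HasFDerivAt (fun r => gaussD d r μ (Matrix.diagonal D)) (gaussF D r μ) r := by
  have h1 : ∀ i ∈ (Finset.univ : Finset (Fin d)),
      HasFDerivAt (fun r : Fin d → ℝ => -(r i - μ i) ^ 2 / (2 * D i))
      ((-(r i - μ i) / D i) • ContinuousLinearMap.proj (R := ℝ) (φ := fun _ : Fin d => ℝ) i) r := by
    intro i _
    have hp : HasFDerivAt (fun r : Fin d → ℝ => r i)
      (ContinuousLinearMap.proj (R := ℝ) (φ := fun _ : Fin d => ℝ) i) r := hasFDerivAt_apply i r
    have hd : HasDerivAt (fun x : ℝ => -(x - μ i) ^ 2 / (2 * D i)) (-(r i - μ i) / D i) (r i) := by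
      have := ((((hasDerivAt_id (r i)).sub_const (μ i)).pow 2).neg).div_const (2 * D i)
      refine this.congr_deriv ?_
      have := (hD i).ne'
      simp only [id, Nat.cast_ofNat]
      field_simp
      simp
    exact hd.comp_hasFDerivAt r hp
  have h2 := ((HasFDerivAt.fun_sum h1).exp).const_mul
    ((2 * Real.pi) ^ (-(d : ℝ) / 2) * (Matrix.diagonal D).det ^ (-(1 : ℝ) / 2))
  have h3 : (fun r => gaussD d r μ (Matrix.diagonal D)) = _ :=
    funext fun r => gaussD_diag_exp D hD r μ
  rw [h3]
  refine h2.congr_fderiv ?_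
  unfold gaussF
  rw [smul_smul, ← gaussD_diag_exp D hD, Finset.smul_sum]
  simp only [smul_smul]

lemma gaussF_bound {d : ℕ} (D : Fin d → ℝ) (hD : ∀ i, 0 < D i) (r μ : Fin d → ℝ) :
    ‖gaussF D r μ‖ ≤ ∑ i, ((2 * Real.pi) ^ (-(d : ℝ) / 2) *
      (Matrix.diagonal D).det ^ (-(1 : ℝ) / 2)) * ((1 + D i) / D i) := by
  unfold gaussF
  refine (norm_sum_le _ _).trans (Finset.sum_le_sum fun i _ => ?_)
  rw [norm_smul]
  have hpn : ‖ContinuousLinearMap.proj (R := ℝ) (φ := fun _ : Fin d => ℝ) i‖ ≤ 1 := by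
    refine ContinuousLinearMap.opNorm_le_bound _ zero_le_one fun x => ?_
    rw [one_mul]
    exact norm_le_pi_norm x i
  refine (mul_le_of_le_one_right (norm_nonneg _) hpn).trans ?_
  have hc := gaussD_diag_const_pos D hD
  have hDi := hD i
  rw [norm_mul, Real.norm_of_nonneg (gaussD_diag_pos D hD r μ).le, gaussD_diag_exp D hD,
    mul_assoc]
  refine mul_le_mul_of_nonneg_left ?_ hc.le
  rw [norm_div, norm_neg, Real.norm_of_nonneg hDi.le, ← mul_div_assoc]
  refine div_le_div_of_nonneg_right ?_ hDi.le
  rw [Real.norm_eq_abs]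
  set u := r i - μ i with hu
  have hle : Real.exp (∑ i, -(r i - μ i) ^ 2 / (2 * D i)) ≤ Real.exp (-(u ^ 2 / (2 * D i))) := by
    rw [Real.exp_le_exp, hu, ← neg_div]
    have hsn := Finset.single_le_sum (f := fun i => (r i - μ i) ^ 2 / (2 * D i))
      (fun j _ => by have := hD j; positivity) (Finset.mem_univ i)
    simp only [neg_div, Finset.sum_neg_distrib]
    exact neg_le_neg hsn
  have hu1 : |u| ≤ (1 + D i) * (1 + u ^ 2 / (2 * D i)) := by
    have : (1 + D i) * (1 + u ^ 2 / (2 * D i)) = 1 + D i + u ^ 2 / (2 * D i) + u ^ 2 / 2 := by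
      field_simp; ring
    rw [this]
    have h0 : 0 ≤ u ^ 2 / (2 * D i) := by positivity
    nlinarith [sq_nonneg (|u| - 1), sq_abs u]
  have hu2 : 1 + u ^ 2 / (2 * D i) ≤ Real.exp (u ^ 2 / (2 * D i)) := by
    linarith [Real.add_one_le_exp (u ^ 2 / (2 * D i))]
  calc _ ≤ Real.exp (-(u ^ 2 / (2 * D i))) * ((1 + D i) * Real.exp (u ^ 2 / (2 * D i))) := by
        refine mul_le_mul hle (hu1.trans (mul_le_mul_of_nonneg_left hu2 (by positivity)))
          (abs_nonneg _) (Real.exp_pos _).le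
    _ = (1 + D i) := by
        rw [mul_left_comm, ← Real.exp_add]; simp

lemma diag_inv {d : ℕ} (D : Fin d → ℝ) (hD : ∀ i, 0 < D i) :
    (Matrix.diagonal D)⁻¹ = Matrix.diagonal (fun i => (D i)⁻¹) := by
  apply Matrix.inv_eq_right_inv
  rw [Matrix.diagonal_mul_diagonal]
  have : (fun i => D i * (D i)⁻¹) = fun _ => 1 := by
    funext i; exact mul_inv_cancel₀ (hD i).ne'
  rw [this, Matrix.diagonal_one]

lemma precision_posDef {d k : ℕ} (D : Fin d → ℝ) (hD : ∀ i, 0 < D i)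
    (β : Matrix (Fin d) (Fin k) ℝ) (hβ : βᵀ * β = 1) :
    (βᵀ * (Matrix.diagonal D)⁻¹ * β).PosDef := by
  have h1 : ((Matrix.diagonal D)⁻¹).PosDef := by
    rw [diag_inv D hD]
    exact Matrix.PosDef.diagonal fun i => inv_pos.2 (hD i)
  have hinj : Function.Injective β.mulVec := by
    intro x y hxy
    have := congrArg (fun v => βᵀ *ᵥ v) hxy
    simpa [Matrix.mulVec_mulVec, hβ] using this
  have := h1.conjTranspose_mul_mul_same hinj
  rwa [Matrix.conjTranspose_eq_transpose_of_trivial] at this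

lemma gauss_factor {d k : ℕ} (D : Fin d → ℝ) (hD : ∀ i, 0 < D i)
    (β : Matrix (Fin d) (Fin k) ℝ) (hβ : βᵀ * β = 1) (a : ℝ) (r : Fin d → ℝ) :
    ∃ c : ℝ, 0 < c ∧ ∀ f : Fin k → ℝ,
      gaussD d r (a • (β *ᵥ f)) (Matrix.diagonal D) = c *
        gaussD k ((βᵀ * (Matrix.diagonal D)⁻¹ * β)⁻¹ *ᵥ (βᵀ *ᵥ ((Matrix.diagonal D)⁻¹ *ᵥ r)))
          (a • f) (βᵀ * (Matrix.diagonal D)⁻¹ * β)⁻¹ := by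
  have hM := precision_posDef D hD β hβ
  set L := (Matrix.diagonal D)⁻¹ with hL
  set M := βᵀ * L * β with hMdef
  set z := βᵀ *ᵥ (L *ᵥ r) with hz
  have hMdet : IsUnit M.det := hM.det_pos.ne'.isUnit
  have hLT : Lᵀ = L := by
    rw [hL, diag_inv D hD, Matrix.diagonal_transpose]
  have hMT : Mᵀ = M := by
    rw [hMdef, Matrix.transpose_mul, Matrix.transpose_mul, hLT, Matrix.transpose_transpose,
      Matrix.mul_assoc]
  have hGpos : 0 < (M⁻¹).det := hM.inv.det_pos
  have hC1 := gaussD_diag_const_pos D hD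
  set C1 := (2 * Real.pi) ^ (-(d : ℝ) / 2) * (Matrix.diagonal D).det ^ (-(1 : ℝ) / 2) with hC1d
  have hC2 : 0 < (2 * Real.pi) ^ (-(k : ℝ) / 2) * (M⁻¹).det ^ (-(1 : ℝ) / 2) := by
    have := Real.pi_pos
    positivity
  set C2 := (2 * Real.pi) ^ (-(k : ℝ) / 2) * (M⁻¹).det ^ (-(1 : ℝ) / 2) with hC2d
  refine ⟨C1 / C2 * Real.exp (-(r ⬝ᵥ (L *ᵥ r) - (M⁻¹ *ᵥ z) ⬝ᵥ z) / 2), by positivity, ?_⟩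
  intro f
  unfold gaussD
  rw [← hC1d, ← hC2d, ← hL, Matrix.nonsing_inv_nonsing_inv _ hMdet]
  have hMG : M *ᵥ (M⁻¹ *ᵥ z) = z := by
    rw [Matrix.mulVec_mulVec, Matrix.mul_nonsing_inv _ hMdet, Matrix.one_mulVec]
  have hsymM : ∀ x y : Fin k → ℝ, x ⬝ᵥ (M *ᵥ y) = (M *ᵥ x) ⬝ᵥ y := by
    intro x y
    rw [Matrix.dotProduct_mulVec, ← Matrix.mulVec_transpose, hMT]
  have hsymL : ∀ x y : Fin d → ℝ, x ⬝ᵥ (L *ᵥ y) = (L *ᵥ x) ⬝ᵥ y := by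
    intro x y
    rw [Matrix.dotProduct_mulVec, ← Matrix.mulVec_transpose, hLT]
  have hb : ∀ (x : Fin k → ℝ) (y : Fin d → ℝ), (β *ᵥ x) ⬝ᵥ y = x ⬝ᵥ (βᵀ *ᵥ y) := by
    intro x y
    rw [Matrix.dotProduct_mulVec, Matrix.vecMul_transpose]
  have e1 : (r - a • (β *ᵥ f)) ⬝ᵥ (L *ᵥ (r - a • (β *ᵥ f))) =
      r ⬝ᵥ (L *ᵥ r) - 2 * a * (f ⬝ᵥ z) + a ^ 2 * (f ⬝ᵥ (M *ᵥ f)) := by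
    have h3 : f ⬝ᵥ (M *ᵥ f) = (β *ᵥ f) ⬝ᵥ (L *ᵥ (β *ᵥ f)) := by
      rw [hb, hMdef]; simp only [Matrix.mulVec_mulVec, Matrix.mul_assoc]
    have h4 : f ⬝ᵥ z = (β *ᵥ f) ⬝ᵥ (L *ᵥ r) := by rw [hb]
    have h5 : r ⬝ᵥ (L *ᵥ (β *ᵥ f)) = (β *ᵥ f) ⬝ᵥ (L *ᵥ r) := by
      rw [hsymL, dotProduct_comm]
    rw [h3, h4]
    simp only [Matrix.mulVec_sub, Matrix.mulVec_smul, dotProduct_sub, sub_dotProduct,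
      dotProduct_smul, smul_dotProduct, smul_eq_mul, h5]
    ring
  have e2 : (M⁻¹ *ᵥ z - a • f) ⬝ᵥ (M *ᵥ (M⁻¹ *ᵥ z - a • f)) =
      (M⁻¹ *ᵥ z) ⬝ᵥ z - 2 * a * (f ⬝ᵥ z) + a ^ 2 * (f ⬝ᵥ (M *ᵥ f)) := by
    have h5 : (M⁻¹ *ᵥ z) ⬝ᵥ (M *ᵥ f) = f ⬝ᵥ z := by
      rw [hsymM, hMG, dotProduct_comm]
    simp only [Matrix.mulVec_sub, Matrix.mulVec_smul, dotProduct_sub, sub_dotProduct,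
      dotProduct_smul, smul_dotProduct, smul_eq_mul, h5, hMG]
    ring
  rw [e1, e2]
  have : C1 / C2 * Real.exp (-(r ⬝ᵥ (L *ᵥ r) - (M⁻¹ *ᵥ z) ⬝ᵥ z) / 2) * (C2 *
      Real.exp (-((M⁻¹ *ᵥ z) ⬝ᵥ z - 2 * a * (f ⬝ᵥ z) + a ^ 2 * (f ⬝ᵥ (M *ᵥ f))) / 2)) =
      (C1 / C2 * C2) * (Real.exp (-(r ⬝ᵥ (L *ᵥ r) - (M⁻¹ *ᵥ z) ⬝ᵥ z) / 2) *
      Real.exp (-((M⁻¹ *ᵥ z) ⬝ᵥ z - 2 * a * (f ⬝ᵥ z) + a ^ 2 * (f ⬝ᵥ (M *ᵥ f))) / 2)) := by ring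
  rw [this, ← Real.exp_add, div_mul_cancel₀ _ hC2.ne']
  congr 2
  ring

lemma smul_id_integrable {k : ℕ} (p : (Fin k → ℝ) → ℝ) (hp0 : ∀ f, 0 ≤ p f)
    (hpc : Continuous p) (hpi : Integrable p)
    (hmom : Integrable (fun f : Fin k → ℝ => eucNorm f ^ 2 * p f)) :
    Integrable (fun f : Fin k → ℝ => p f • f) := by
  refine (hpi.add hmom).mono' (hpc.smul continuous_id).aestronglyMeasurable ?_
  refine Filter.Eventually.of_forall fun f => ?_
  rw [norm_smul, Real.norm_of_nonneg (hp0 f)]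
  have h1 : ‖f‖ ≤ 1 + eucNorm f ^ 2 := by
    rw [pi_norm_le_iff_of_nonneg (by positivity)]
    intro i
    have hs : 0 ≤ ∑ i, f i ^ 2 := Finset.sum_nonneg fun i _ => sq_nonneg _
    have h2 : f i ^ 2 ≤ eucNorm f ^ 2 := by
      unfold eucNorm
      rw [Real.sq_sqrt hs]
      exact Finset.single_le_sum (f := fun i => f i ^ 2) (fun j _ => sq_nonneg _)
        (Finset.mem_univ i)
    rw [Real.norm_eq_abs]
    nlinarith [sq_nonneg (|f i| - 1), sq_abs (f i)]
  have := mul_le_mul_of_nonneg_left h1 (hp0 f)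
  simp only [Pi.add_apply]
  linarith

lemma score_identity {d k : ℕ} (D : Fin d → ℝ) (hD : ∀ i, 0 < D i)
    (β : Matrix (Fin d) (Fin k) ℝ) (hβ : βᵀ * β = 1) (a : ℝ)
    (p : (Fin k → ℝ) → ℝ) (hp0 : ∀ f, 0 ≤ p f)
    (hpc : Continuous p) (hpi : Integrable p) (hp1 : ∫ f, p f = 1)
    (hmom : Integrable (fun f : Fin k → ℝ => eucNorm f ^ 2 * p f)) (r : Fin d → ℝ) :
    gradv (fun r' => Real.log (∫ f, gaussD d r' (a • (β *ᵥ f)) (Matrix.diagonal D) * p f)) r =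
    a • (((Matrix.diagonal D)⁻¹ * β) *ᵥ
      ((∫ f, gaussD k ((βᵀ * (Matrix.diagonal D)⁻¹ * β)⁻¹ *ᵥ
          (βᵀ *ᵥ ((Matrix.diagonal D)⁻¹ *ᵥ r)))
          (a • f) (βᵀ * (Matrix.diagonal D)⁻¹ * β)⁻¹ * p f)⁻¹ •
       ∫ f, (gaussD k ((βᵀ * (Matrix.diagonal D)⁻¹ * β)⁻¹ *ᵥ
          (βᵀ *ᵥ ((Matrix.diagonal D)⁻¹ *ᵥ r)))
          (a • f) (βᵀ * (Matrix.diagonal D)⁻¹ * β)⁻¹ * p f) • f)) -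
      (Matrix.diagonal D)⁻¹ *ᵥ r := by
  obtain ⟨c, hc, hfac⟩ := gauss_factor D hD β hβ a r
  have hcont : ∀ r, Continuous fun f : Fin k → ℝ =>
      gaussD d r (a • (β *ᵥ f)) (Matrix.diagonal D) := fun r =>
    gaussD_continuous _ continuous_const
      ((continuous_const.matrix_mulVec continuous_id).const_smul a)
  set C := (2 * Real.pi) ^ (-(d : ℝ) / 2) * (Matrix.diagonal D).det ^ (-(1 : ℝ) / 2) with hC
  have hwint : ∀ r, Integrable fun f : Fin k → ℝ =>
      gaussD d r (a • (β *ᵥ f)) (Matrix.diagonal D) * p f := by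
    intro r
    refine hpi.bdd_mul (c := C) (hcont r).aestronglyMeasurable ?_
    refine Filter.Eventually.of_forall fun f => ?_
    rw [Real.norm_of_nonneg (gaussD_diag_pos D hD _ _).le]
    exact gaussD_diag_le D hD _ _
  have hwfint : Integrable fun f : Fin k → ℝ =>
      (gaussD d r (a • (β *ᵥ f)) (Matrix.diagonal D) * p f) • f := by
    simp only [mul_smul]
    refine (smul_id_integrable p hp0 hpc hpi hmom).bdd_smul (C := C)
      (hcont r).aestronglyMeasurable ?_
    refine Filter.Eventually.of_forall fun f => ?_
    rw [Real.norm_of_nonneg (gaussD_diag_pos D hD _ _).le]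
    exact gaussD_diag_le D hD _ _
  have hPpos : 0 < ∫ f, gaussD d r (a • (β *ᵥ f)) (Matrix.diagonal D) * p f := by
    rw [integral_pos_iff_support_of_nonneg
      (fun f => mul_nonneg (gaussD_diag_pos D hD _ _).le (hp0 f)) (hwint r)]
    have h1 : 0 < ∫ f, p f := by rw [hp1]; exact one_pos
    rw [integral_pos_iff_support_of_nonneg hp0 hpi] at h1
    refine h1.trans_le (measure_mono fun f hf => ?_)
    exact mul_ne_zero (gaussD_diag_pos D hD _ _).ne' hf
  have hFcont : Continuous fun f : Fin k → ℝ => gaussF D r (a • (β *ᵥ f)) := by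
    unfold gaussF
    refine continuous_finsetSum _ fun i _ => ?_
    have hci : Continuous fun f : Fin k → ℝ => (a • (β *ᵥ f)) i :=
      (continuous_apply i).comp ((continuous_const.matrix_mulVec continuous_id).const_smul a)
    have hcj : Continuous fun f : Fin k → ℝ =>
        gaussD d r (a • (β *ᵥ f)) (Matrix.diagonal D) * (-(r i - (a • (β *ᵥ f)) i) / D i) :=
      (hcont r).mul (((continuous_const.sub hci).neg).div_const _)
    exact hcj.smul continuous_const
  have hbint : Integrable fun f : Fin k → ℝ => p f * ∑ i, C * ((1 + D i) / D i) :=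
    hpi.mul_const _
  have hbd : ∀ f : Fin k → ℝ, ∀ x : Fin d → ℝ, ‖p f • gaussF D x (a • (β *ᵥ f))‖ ≤
      p f * ∑ i, C * ((1 + D i) / D i) := by
    intro f x
    rw [norm_smul, Real.norm_of_nonneg (hp0 f)]
    exact mul_le_mul_of_nonneg_left (gaussF_bound D hD _ _) (hp0 f)
  have hderiv := hasFDerivAt_integral_of_dominated_of_fderiv_le (𝕜 := ℝ) (μ := volume)
    (F := fun (x : Fin d → ℝ) (f : Fin k → ℝ) =>
      gaussD d x (a • (β *ᵥ f)) (Matrix.diagonal D) * p f)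
    (F' := fun x f => p f • gaussF D x (a • (β *ᵥ f)))
    (x₀ := r) (s := Set.univ) (bound := fun f => p f * ∑ i, C * ((1 + D i) / D i))
    Filter.univ_mem
    (Filter.Eventually.of_forall fun x => (hwint x).aestronglyMeasurable)
    (hwint r) (hpc.smul hFcont).aestronglyMeasurable
    (Filter.Eventually.of_forall fun f x _ => hbd f x) hbint
    (Filter.Eventually.of_forall fun f x _ => (gaussD_hasFDerivAt D hD x _).mul_const (p f))
  have hF'int : Integrable fun f : Fin k → ℝ => p f • gaussF D r (a • (β *ᵥ f)) :=
    hbint.mono' (hpc.smul hFcont).aestronglyMeasurable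
      (Filter.Eventually.of_forall fun f => hbd f r)
  have hlog := hderiv.log hPpos.ne'
  have hxi : (∫ f, gaussD k ((βᵀ * (Matrix.diagonal D)⁻¹ * β)⁻¹ *ᵥ
          (βᵀ *ᵥ ((Matrix.diagonal D)⁻¹ *ᵥ r)))
          (a • f) (βᵀ * (Matrix.diagonal D)⁻¹ * β)⁻¹ * p f)⁻¹ •
       (∫ f, (gaussD k ((βᵀ * (Matrix.diagonal D)⁻¹ * β)⁻¹ *ᵥ
          (βᵀ *ᵥ ((Matrix.diagonal D)⁻¹ *ᵥ r)))
          (a • f) (βᵀ * (Matrix.diagonal D)⁻¹ * β)⁻¹ * p f) • f) =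
      (∫ f, gaussD d r (a • (β *ᵥ f)) (Matrix.diagonal D) * p f)⁻¹ •
        ∫ f, (gaussD d r (a • (β *ᵥ f)) (Matrix.diagonal D) * p f) • f := by
    simp only [hfac, mul_assoc, mul_smul]
    rw [integral_const_mul, integral_smul, smul_smul, mul_inv, mul_comm c⁻¹, mul_assoc,
      inv_mul_cancel₀ hc.ne', mul_one]
  rw [hxi]
  funext j
  unfold gradv
  rw [hlog.fderiv]
  set P := ∫ f, gaussD d r (a • (β *ᵥ f)) (Matrix.diagonal D) * p f with hP
  have hDj := hD j
  have happ : ∀ f : Fin k → ℝ, (p f • gaussF D r (a • (β *ᵥ f))) (Pi.single j 1) =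
      -(r j / D j) * (gaussD d r (a • (β *ᵥ f)) (Matrix.diagonal D) * p f) +
      (a / D j) * ((β *ᵥ ((gaussD d r (a • (β *ᵥ f)) (Matrix.diagonal D) * p f) • f)) j) := by
    intro f
    unfold gaussF
    simp only [_root_.smul_apply, _root_.sum_apply,
      ContinuousLinearMap.proj_apply, smul_eq_mul, Matrix.mulVec_smul, Pi.smul_apply]
    rw [Finset.sum_eq_single j]
    · rw [Pi.single_eq_same]
      field_simp
      ring
    · intro b _ hb
      rw [Pi.single_eq_of_ne hb, mul_zero]
    · simp
  let lin : (Fin k → ℝ) →L[ℝ] ℝ :=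
    (ContinuousLinearMap.proj (R := ℝ) (φ := fun _ : Fin d => ℝ) j).comp
      (LinearMap.toContinuousLinearMap (Matrix.mulVecLin β))
  have hlin : ∀ v, lin v = (β *ᵥ v) j := fun v => rfl
  have hint : (∫ f, p f • gaussF D r (a • (β *ᵥ f))) (Pi.single j 1) =
      -(r j / D j) * P + (a / D j) *
        (β *ᵥ ∫ f, (gaussD d r (a • (β *ᵥ f)) (Matrix.diagonal D) * p f) • f) j := by
    rw [ContinuousLinearMap.integral_apply hF'int]
    simp only [happ, ← hlin]
    rw [integral_add ((hwint r).const_mul _) ((lin.integrable_comp hwfint).const_mul _),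
      integral_const_mul, integral_const_mul, lin.integral_comp_comm hwfint]
  rw [_root_.smul_apply, hint, diag_inv D hD]
  simp only [Pi.sub_apply, Pi.smul_apply, smul_eq_mul, ← Matrix.mulVec_mulVec,
    Matrix.mulVec_diagonal, Matrix.mulVec_smul]
  field_simp
  ring

lemma eucNorm_sq {n : ℕ} (x : Fin n → ℝ) : eucNorm x ^ 2 = ∑ i, x i ^ 2 := by
  unfold eucNorm
  exact Real.sq_sqrt (Finset.sum_nonneg fun i _ => sq_nonneg _)

lemma eucNorm_continuous {n : ℕ} : Continuous (eucNorm : (Fin n → ℝ) → ℝ) := by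
  unfold eucNorm
  fun_prop

lemma eucNorm_neg {n : ℕ} (x : Fin n → ℝ) : eucNorm (-x) = eucNorm x := by
  unfold eucNorm
  simp

lemma xiFun_measurable {d k : ℕ} (β : Matrix (Fin d) (Fin k) ℝ) (σ : Fin d → ℝ)
    (pfac : (Fin k → ℝ) → ℝ) (hpc : Continuous pfac) (t : ℝ) :
    Measurable (xiFun β σ pfac t) := by
  have ha : Continuous fun q : (Fin k → ℝ) × (Fin k → ℝ) => Gam β σ t *ᵥ q.1 :=
    continuous_const.matrix_mulVec continuous_fst
  have hb : Continuous fun q : (Fin k → ℝ) × (Fin k → ℝ) => af t • q.2 :=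
    continuous_snd.fun_const_smul (af t)
  have hG0 := gaussD_continuous (Gam β σ t) ha hb
  have hG1 : Continuous fun q : (Fin k → ℝ) × (Fin k → ℝ) => pfac q.2 := hpc.comp continuous_snd
  have hG : Continuous fun q : (Fin k → ℝ) × (Fin k → ℝ) =>
      gaussD k (Gam β σ t *ᵥ q.1) (af t • q.2) (Gam β σ t) * pfac q.2 := hG0.mul hG1
  have h1 := (hG.stronglyMeasurable).integral_prod_right' (ν := volume)
  have h2 := ((hG.smul continuous_snd).stronglyMeasurable).integral_prod_right' (ν := volume)
  exact h1.measurable.inv.smul h2.measurable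

lemma mix_integrable {d k : ℕ} (D : Fin d → ℝ) (hD : ∀ i, 0 < D i)
    (β : Matrix (Fin d) (Fin k) ℝ) (a : ℝ)
    (p : (Fin k → ℝ) → ℝ) (hp0 : ∀ f, 0 ≤ p f)
    (hpc : Continuous p) (hpi : Integrable p) (hp1 : ∫ f, p f = 1) :
    Integrable (fun r => ∫ f, gaussD d r (a • (β *ᵥ f)) (Matrix.diagonal D) * p f) ∧
    ∫ r, ∫ f, gaussD d r (a • (β *ᵥ f)) (Matrix.diagonal D) * p f = 1 := by
  have ha : Continuous fun q : (Fin d → ℝ) × (Fin k → ℝ) => q.1 := continuous_fst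
  have hb0 : Continuous fun q : (Fin d → ℝ) × (Fin k → ℝ) => β *ᵥ q.2 :=
    continuous_const.matrix_mulVec continuous_snd
  have hb : Continuous fun q : (Fin d → ℝ) × (Fin k → ℝ) => a • (β *ᵥ q.2) := hb0.fun_const_smul a
  have hG0 := gaussD_continuous (Matrix.diagonal D) ha hb
  have hG1 : Continuous fun q : (Fin d → ℝ) × (Fin k → ℝ) => p q.2 := hpc.comp continuous_snd
  have hG : Continuous fun q : (Fin d → ℝ) × (Fin k → ℝ) =>
      gaussD d q.1 (a • (β *ᵥ q.2)) (Matrix.diagonal D) * p q.2 := hG0.mul hG1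
  have hint : Integrable (fun q : (Fin d → ℝ) × (Fin k → ℝ) =>
      gaussD d q.1 (a • (β *ᵥ q.2)) (Matrix.diagonal D) * p q.2) (volume.prod volume) := by
    rw [integrable_prod_iff' hG.aestronglyMeasurable]
    have hA : ∀ f : Fin k → ℝ, Integrable (fun r : Fin d → ℝ =>
        gaussD d r (a • (β *ᵥ f)) (Matrix.diagonal D) * p f) := fun f =>
      (gaussD_diag_integrable D hD (a • (β *ᵥ f))).mul_const (p f)
    refine ⟨Filter.Eventually.of_forall hA, ?_⟩
    refine hpi.congr (Filter.Eventually.of_forall fun f => ?_)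
    have : ∀ r : Fin d → ℝ, ‖gaussD d r (a • (β *ᵥ f)) (Matrix.diagonal D) * p f‖ =
        gaussD d r (a • (β *ᵥ f)) (Matrix.diagonal D) * p f := fun r =>
      Real.norm_of_nonneg (mul_nonneg (gaussD_diag_pos D hD _ _).le (hp0 f))
    simp only [this]
    rw [integral_mul_const, gaussD_diag_integral D hD, one_mul]
  refine ⟨hint.integral_prod_left, ?_⟩
  rw [integral_integral_swap (f := fun (r : Fin d → ℝ) (f : Fin k → ℝ) =>
    gaussD d r (a • (β *ᵥ f)) (Matrix.diagonal D) * p f) hint]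
  simp only [integral_mul_const, gaussD_diag_integral D hD, one_mul]
  exact hp1

/-- score approximation from an approximation of `ξ`. -/
theorem score_approximation_from_xi_approximation
    (d k : ℕ) (hk1 : 1 ≤ k) (hkd : k ≤ d)
    (β : Matrix (Fin d) (Fin k) ℝ) (hβ : βᵀ * β = 1)
    (pfac : (Fin k → ℝ) → ℝ)
    (hpfac_nonneg : ∀ f, 0 ≤ pfac f)
    (hpfac_prob : (∫ f : Fin k → ℝ, pfac f) = 1)
    (hpfac_smooth : ContDiff ℝ 2 pfac)
    (hpfac_mom : Integrable (fun f : Fin k → ℝ => eucNorm f ^ 2 * pfac f))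
    (σ : Fin d → ℝ) (σmax : ℝ)
    (hσpos : ∀ i, 0 < σ i)
    (hσdec : ∀ i j : Fin d, i ≤ j → σ j ≤ σ i)
    (hσmax : ∀ i, σ i ≤ σmax)
    (ε T S : ℝ) (hε : ε ∈ Set.Ioo (0 : ℝ) 1) (hT : 0 < T) (hS : 0 < S)
    (g : (Fin k → ℝ) → ℝ → (Fin k → ℝ))
    (hgmeas : Measurable fun p : (Fin k → ℝ) × ℝ => g p.1 p.2)
    (hgzero : ∀ z : Fin k → ℝ, ∀ t ∈ Set.Icc (0 : ℝ) T, S < eucNorm z → g z t = 0)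
    (hgapprox : ∀ z : Fin k → ℝ, ∀ t ∈ Set.Icc (0 : ℝ) T, eucNorm z ≤ S →
      ∀ i : Fin k, |g z t i - xiFun β σ pfac t z i| ≤ ε)
    (htrunc : ∀ t ∈ Set.Icc (0 : ℝ) T,
      (∫ r : Fin d → ℝ,
          Set.indicator
            {r' : Fin d → ℝ | S < eucNorm (βᵀ *ᵥ ((Lam σ t)⁻¹ *ᵥ r'))}
            (fun r' =>
              eucNorm (xiFun β σ pfac t (βᵀ *ᵥ ((Lam σ t)⁻¹ *ᵥ r'))) ^ 2
                * pT β σ pfac t r') r)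
        ≤ ε ^ 2) :
    ∀ t ∈ Set.Icc (0 : ℝ) T,
      Real.sqrt
          (∫ r : Fin d → ℝ,
            eucNorm
                ((af t • (((Lam σ t)⁻¹ * β) *ᵥ g (βᵀ *ᵥ ((Lam σ t)⁻¹ *ᵥ r)) t)
                    - (Lam σ t)⁻¹ *ᵥ r)
                  - gradv (fun r' => Real.log (pT β σ pfac t r')) r) ^ 2
              * pT β σ pfac t r)
        ≤ (Real.sqrt k + 1) * ε / min (σ ⟨d - 1, by omega⟩ ^ 2) 1 := by
  intro t ht
  have hpc : Continuous pfac := hpfac_smooth.continuous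
  have hpi : Integrable pfac := by
    by_contra h
    rw [integral_undef h] at hpfac_prob
    exact zero_ne_one hpfac_prob
  set σd := σ ⟨d - 1, by omega⟩ with hσd
  have hm0 : 0 < min (σd ^ 2) 1 := lt_min (pow_pos (hσpos _) 2) one_pos
  set m := min (σd ^ 2) 1 with hm
  have ha0 : 0 < af t := Real.exp_pos _
  have ha1 : af t ≤ 1 := by
    unfold af
    rw [Real.exp_le_one_iff]
    linarith [ht.1]
  have ha2 : af t ^ 2 ≤ 1 := by nlinarith
  let D : Fin d → ℝ := fun i => hf t + σ i ^ 2 * af t ^ 2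
  have hDm : ∀ i, m ≤ D i := by
    intro i
    have h1 : σd ≤ σ i := hσdec _ _ (by
      rw [Fin.le_def]
      have := i.2
      simp only
      omega)
    have h2 : m ≤ σ i ^ 2 := (min_le_left _ _).trans (by
      have := hσpos ⟨d - 1, by omega⟩
      gcongr)
    have h3 : m ≤ 1 := min_le_right _ _
    have h4 : D i = 1 - af t ^ 2 + σ i ^ 2 * af t ^ 2 := rfl
    rw [h4]
    nlinarith [mul_le_mul_of_nonneg_right h2 (sq_nonneg (af t)),
      mul_le_mul_of_nonneg_right h3 (sub_nonneg.2 ha2)]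
  have hD : ∀ i, 0 < D i := fun i => hm0.trans_le (hDm i)
  have hLam : Lam σ t = Matrix.diagonal D := rfl
  obtain ⟨hPint, hP1⟩ := mix_integrable D hD β (af t) pfac hpfac_nonneg hpc hpi hpfac_prob
  change Integrable (pT β σ pfac t) at hPint
  change ∫ r, pT β σ pfac t r = 1 at hP1
  have hP0 : ∀ r, 0 ≤ pT β σ pfac t r := fun r =>
    integral_nonneg fun f => mul_nonneg (gaussD_diag_pos D hD _ _).le (hpfac_nonneg f)
  have hscore : ∀ r, gradv (fun r' => Real.log (pT β σ pfac t r')) r =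
      af t • (((Lam σ t)⁻¹ * β) *ᵥ xiFun β σ pfac t (βᵀ *ᵥ ((Lam σ t)⁻¹ *ᵥ r))) -
        (Lam σ t)⁻¹ *ᵥ r := fun r =>
    score_identity D hD β hβ (af t) pfac hpfac_nonneg hpc hpi hpfac_prob hpfac_mom r
  have hdiff : ∀ r, eucNorm
      ((af t • (((Lam σ t)⁻¹ * β) *ᵥ g (βᵀ *ᵥ ((Lam σ t)⁻¹ *ᵥ r)) t) - (Lam σ t)⁻¹ *ᵥ r)
        - gradv (fun r' => Real.log (pT β σ pfac t r')) r) ^ 2 =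
      ∑ i, (af t / D i * (β *ᵥ (g (βᵀ *ᵥ ((Lam σ t)⁻¹ *ᵥ r)) t -
        xiFun β σ pfac t (βᵀ *ᵥ ((Lam σ t)⁻¹ *ᵥ r)))) i) ^ 2 := by
    intro r
    rw [hscore, eucNorm_sq]
    refine Finset.sum_congr rfl fun i _ => ?_
    congr 1
    rw [sub_sub_sub_cancel_right, ← smul_sub, ← Matrix.mulVec_sub, ← Matrix.mulVec_mulVec]
    generalize g (βᵀ *ᵥ ((Lam σ t)⁻¹ *ᵥ r)) t -
        xiFun β σ pfac t (βᵀ *ᵥ ((Lam σ t)⁻¹ *ᵥ r)) = v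
    rw [hLam, diag_inv D hD, Pi.smul_apply, Matrix.mulVec_diagonal, smul_eq_mul]
    ring
  have hiso : ∀ v : Fin k → ℝ, ∑ i, (β *ᵥ v) i ^ 2 = ∑ i, v i ^ 2 := by
    intro v
    have h1 : (β *ᵥ v) ⬝ᵥ (β *ᵥ v) = v ⬝ᵥ v := by
      rw [Matrix.dotProduct_mulVec, ← Matrix.mulVec_transpose, Matrix.mulVec_mulVec, hβ,
        Matrix.one_mulVec]
    simp only [dotProduct] at h1
    simpa only [sq] using h1
  have hup : ∀ v : Fin k → ℝ, ∑ i, (af t / D i * (β *ᵥ v) i) ^ 2 ≤ (1 / m ^ 2) * ∑ i, v i ^ 2 := by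
    intro v
    rw [← hiso, Finset.mul_sum]
    refine Finset.sum_le_sum fun i _ => ?_
    rw [mul_pow]
    refine mul_le_mul_of_nonneg_right ?_ (sq_nonneg _)
    have h1 := hDm i
    have h2 := hD i
    have : af t / D i ≤ 1 / m := div_le_div₀ zero_le_one ha1 hm0 h1
    calc (af t / D i) ^ 2 ≤ (1 / m) ^ 2 := by gcongr
      _ = 1 / m ^ 2 := by rw [div_pow, one_pow]
  set B := 1 + ∑ i, D i with hB
  have hBpos : 0 < B := by
    have : 0 ≤ ∑ i, D i := Finset.sum_nonneg fun i _ => (hD i).le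
    linarith
  have hDB : ∀ i, D i ≤ B := by
    intro i
    have := Finset.single_le_sum (f := D) (fun j _ => (hD j).le) (Finset.mem_univ i)
    linarith
  have hlow : ∀ v : Fin k → ℝ, ∑ i, v i ^ 2 ≤
      (B / af t) ^ 2 * ∑ i, (af t / D i * (β *ᵥ v) i) ^ 2 := by
    intro v
    rw [← hiso, Finset.mul_sum]
    refine Finset.sum_le_sum fun i _ => ?_
    rw [← mul_pow, ← mul_assoc, mul_pow]
    refine le_mul_of_one_le_left (sq_nonneg _) ?_
    have h2 := hD i
    have : B / af t * (af t / D i) = B / D i := by field_simp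
    rw [this]
    exact one_le_pow₀ ((one_le_div h2).2 (hDB i))
  simp only [hdiff]
  have hε0 : 0 < ε := hε.1
  have hR0 : 0 ≤ (Real.sqrt k + 1) * ε / m := by positivity
  by_cases hX : Integrable (fun r : Fin d → ℝ =>
      (∑ i, (af t / D i * (β *ᵥ (g (βᵀ *ᵥ ((Lam σ t)⁻¹ *ᵥ r)) t -
        xiFun β σ pfac t (βᵀ *ᵥ ((Lam σ t)⁻¹ *ᵥ r)))) i) ^ 2) * pT β σ pfac t r)
  swap
  · rw [integral_undef hX, Real.sqrt_zero]
    exact hR0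
  have hzc : Continuous fun r : Fin d → ℝ => βᵀ *ᵥ ((Lam σ t)⁻¹ *ᵥ r) :=
    continuous_const.matrix_mulVec (continuous_const.matrix_mulVec continuous_id)
  have hset : MeasurableSet {r' : Fin d → ℝ | S < eucNorm (βᵀ *ᵥ ((Lam σ t)⁻¹ *ᵥ r'))} :=
    measurableSet_lt measurable_const (eucNorm_continuous.comp hzc).measurable
  set J : (Fin d → ℝ) → ℝ := Set.indicator
      {r' : Fin d → ℝ | S < eucNorm (βᵀ *ᵥ ((Lam σ t)⁻¹ *ᵥ r'))}
      (fun r' => eucNorm (xiFun β σ pfac t (βᵀ *ᵥ ((Lam σ t)⁻¹ *ᵥ r'))) ^ 2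
        * pT β σ pfac t r') with hJ
  have hJ0 : ∀ r, 0 ≤ J r := fun r =>
    Set.indicator_nonneg (fun r _ => mul_nonneg (sq_nonneg _) (hP0 r)) r
  have hJmeas : AEStronglyMeasurable J volume := by
    refine AEStronglyMeasurable.indicator ?_ hset
    refine AEStronglyMeasurable.mul ?_ hPint.aestronglyMeasurable
    exact ((eucNorm_continuous.measurable.comp
      ((xiFun_measurable β σ pfac hpc t).comp hzc.measurable)).pow_const 2).aestronglyMeasurable
  have hJint : Integrable J := by
    refine (hX.const_mul ((B / af t) ^ 2)).mono' hJmeas (Filter.Eventually.of_forall fun r => ?_)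
    rw [Real.norm_of_nonneg (hJ0 r)]
    rw [← mul_assoc]
    by_cases hr : S < eucNorm (βᵀ *ᵥ ((Lam σ t)⁻¹ *ᵥ r))
    · have hJr : J r = eucNorm (xiFun β σ pfac t (βᵀ *ᵥ ((Lam σ t)⁻¹ *ᵥ r))) ^ 2
        * pT β σ pfac t r := Set.indicator_of_mem (by exact hr) _
      rw [hJr]
      refine mul_le_mul_of_nonneg_right ?_ (hP0 r)
      refine le_trans (le_of_eq ?_) (hlow _)
      rw [hgzero _ t ht hr, eucNorm_sq]
      refine Finset.sum_congr rfl fun i _ => ?_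
      simp
    · have hJr : J r = 0 := Set.indicator_of_notMem (by exact hr) _
      rw [hJr]
      exact mul_nonneg (mul_nonneg (sq_nonneg _) (Finset.sum_nonneg fun i _ => sq_nonneg _)) (hP0 r)
  have hpt : ∀ r : Fin d → ℝ, (∑ i, (af t / D i * (β *ᵥ (g (βᵀ *ᵥ ((Lam σ t)⁻¹ *ᵥ r)) t -
        xiFun β σ pfac t (βᵀ *ᵥ ((Lam σ t)⁻¹ *ᵥ r)))) i) ^ 2) * pT β σ pfac t r ≤
      (1 / m ^ 2) * (k * ε ^ 2 * pT β σ pfac t r + J r) := by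
    intro r
    refine (mul_le_mul_of_nonneg_right (hup _) (hP0 r)).trans ?_
    rw [mul_assoc]
    refine mul_le_mul_of_nonneg_left ?_ (by positivity)
    by_cases hr : S < eucNorm (βᵀ *ᵥ ((Lam σ t)⁻¹ *ᵥ r))
    · have hJr : J r = eucNorm (xiFun β σ pfac t (βᵀ *ᵥ ((Lam σ t)⁻¹ *ᵥ r))) ^ 2
        * pT β σ pfac t r := Set.indicator_of_mem (by exact hr) _
      rw [hJr, hgzero _ t ht hr, eucNorm_sq]
      simp only [Pi.sub_apply, Pi.zero_apply, zero_sub, neg_sq]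
      have := mul_nonneg (mul_nonneg (Nat.cast_nonneg k) (sq_nonneg ε)) (hP0 r)
      linarith
    · have hs : ∑ i, (g (βᵀ *ᵥ ((Lam σ t)⁻¹ *ᵥ r)) t -
        xiFun β σ pfac t (βᵀ *ᵥ ((Lam σ t)⁻¹ *ᵥ r))) i ^ 2 ≤ k * ε ^ 2 := by
        calc _ ≤ ∑ i : Fin k, ε ^ 2 := Finset.sum_le_sum fun i _ => by
              have := hgapprox _ t ht (not_lt.1 hr) i
              rw [Pi.sub_apply, ← sq_abs]
              gcongr
          _ = k * ε ^ 2 := by simp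
      have := mul_le_mul_of_nonneg_right hs (hP0 r)
      linarith [hJ0 r]
  have hI : ∫ r : Fin d → ℝ, (∑ i, (af t / D i * (β *ᵥ (g (βᵀ *ᵥ ((Lam σ t)⁻¹ *ᵥ r)) t -
        xiFun β σ pfac t (βᵀ *ᵥ ((Lam σ t)⁻¹ *ᵥ r)))) i) ^ 2) * pT β σ pfac t r ≤
      (1 / m ^ 2) * (k * ε ^ 2 + ε ^ 2) := by
    have hKint : Integrable fun r : Fin d → ℝ => k * ε ^ 2 * pT β σ pfac t r + J r :=
      (hPint.const_mul _).add hJint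
    refine (integral_mono hX (hKint.const_mul _) hpt).trans ?_
    rw [integral_const_mul, integral_add (hPint.const_mul _) hJint, integral_const_mul, hP1,
      mul_one]
    have := htrunc t ht
    gcongr
  rw [Real.sqrt_le_left hR0]
  refine hI.trans ?_
  have hk : Real.sqrt k ^ 2 = k := Real.sq_sqrt (Nat.cast_nonneg k)
  rw [div_pow, mul_pow, div_mul_eq_mul_div, one_mul]
  refine div_le_div_of_nonneg_right ?_ (sq_nonneg m)
  nlinarith [mul_nonneg (Real.sqrt_nonneg k) (sq_nonneg ε)]
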